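/- Let q_s^(ℓ) and r_s^(ℓ) be the reserve and residue vectors maintained by the forward push algorithm, initialized with q_s^(ℓ) = 0 for all ℓ, r_s^(0) = e_s, and r_s^(ℓ) = 0 for ℓ ≥ 1. Then after any sequence of forward push operations, for every 0 ≤ ℓ ≤ L and every node t, p^(ℓ)(s,t) = q_s^(ℓ)(t) + Σ_{k=0}^{ℓ} Σ_{v∈V} r_s^(ℓ−k)(v) · p^(k)(v,t). -/

import Mathlib

open Matrix Finset

/-- The random-walk transition matrix `P = A D⁻¹` of a graph. -/
noncomputable def transP {V : Type*} [Fintype V] [DecidableEq V]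
    (G : SimpleGraph V) [DecidableRel G.Adj] : Matrix V V ℝ :=
  G.adjMatrix ℝ * (Matrix.diagonal fun v => (G.degree v : ℝ))⁻¹

/-- `ℓ`-step transition probability from `s` to `t`: the `(t, s)` entry of `P ^ ℓ`. -/
noncomputable def stepProb {V : Type*} [Fintype V] [DecidableEq V]
    (G : SimpleGraph V) [DecidableRel G.Adj] (ℓ : ℕ) (s t : V) : ℝ :=
  ((transP G) ^ ℓ) t s

/-- The standard initialization of the forward-push state for source `s`:
all reserves `q` are `0`, the residue is `r⁽⁰⁾ = e_s` and `r⁽ℓ⁾ = 0` for `ℓ ≥ 1`.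
The first component is the family of reserve vectors `q⁽ℓ⁾`, the second
the family of residue vectors `r⁽ℓ⁾`. -/
noncomputable def pushInit {V : Type*} [DecidableEq V] (s : V) :
    (ℕ → V → ℝ) × (ℕ → V → ℝ) :=
  (fun _ _ => 0, fun k v => if k = 0 ∧ v = s then 1 else 0)

/-- One forward push operation at node `u` and level `ℓ`:
`q⁽ℓ⁾(u) += r⁽ℓ⁾(u)`; for each neighbor `v` of `u`, `r⁽ℓ⁺¹⁾(v) += r⁽ℓ⁾(u)/d(u)`;
finally `r⁽ℓ⁾(u) := 0`. -/
noncomputable def pushOp {V : Type*} [Fintype V] [DecidableEq V]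
    (G : SimpleGraph V) [DecidableRel G.Adj]
    (σ : (ℕ → V → ℝ) × (ℕ → V → ℝ)) (u : V) (ℓ : ℕ) :
    (ℕ → V → ℝ) × (ℕ → V → ℝ) :=
  (fun k v => if k = ℓ ∧ v = u then σ.1 k v + σ.2 ℓ u else σ.1 k v,
   fun k v =>
     if k = ℓ ∧ v = u then 0
     else if k = ℓ + 1 ∧ G.Adj u v then σ.2 k v + σ.2 ℓ u / (G.degree u : ℝ)
     else σ.2 k v)

/-- The state after performing a given sequence of forward push operations. -/
noncomputable def pushRun {V : Type*} [Fintype V] [DecidableEq V]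
    (G : SimpleGraph V) [DecidableRel G.Adj]
    (σ₀ : (ℕ → V → ℝ) × (ℕ → V → ℝ)) (ops : List (V × ℕ)) :
    (ℕ → V → ℝ) × (ℕ → V → ℝ) :=
  ops.foldl (fun σ op => pushOp G σ op.1 op.2) σ₀

/-!
Let `T` be the action of the transition matrix, and collect reserves and residues by level into
power series `Q(z)` and `R(z)`. The conserved quantity is `Q + (1 - zT)⁻¹ R`: pushing the residue
`x` at level `m` adds `xzᵐ` to `Q` and subtracts `(1 - zT) xzᵐ` from `R`. Initially `Q = 0` and
`R = e_s`, so the level-`ℓ` coefficient is always `T ^ ℓ e_s`, the `ℓ`-step distribution from `s`.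
-/

section WalkMass

variable {R M : Type*} [Semiring R]

section AddCommMonoid

variable [AddCommMonoid M] [Module R M]

/-- The mass reaching each level when all residues `r` walk on under the step operator `T`, i.e.
the coefficients of `(1 - zT)⁻¹ r(z)`. It is bundled as a linear map in `r` because a push changes
the residues additively. -/
def walkMass (T : Module.End R M) : (ℕ → M) →ₗ[R] (ℕ → M) :=
  LinearMap.pi fun ℓ => ∑ k ∈ range (ℓ + 1), (T ^ k) ∘ₗ LinearMap.proj (ℓ - k)

theorem walkMass_apply (T : Module.End R M) (r : ℕ → M) (ℓ : ℕ) :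
    walkMass T r ℓ = ∑ k ∈ range (ℓ + 1), (T ^ k) (r (ℓ - k)) := by
  simp [walkMass]

theorem walkMass_zero (T : Module.End R M) (r : ℕ → M) : walkMass T r 0 = r 0 := by
  simp [walkMass_apply]

theorem walkMass_succ (T : Module.End R M) (r : ℕ → M) (ℓ : ℕ) :
    walkMass T r (ℓ + 1) = T (walkMass T r ℓ) + r (ℓ + 1) := by
  simp [walkMass_apply, sum_range_succ' _ (ℓ + 1), pow_succ']

theorem walkMass_single_zero (T : Module.End R M) (x : M) (ℓ : ℕ) :
    walkMass T (Pi.single 0 x) ℓ = (T ^ ℓ) x := by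
  induction ℓ with
  | zero => simp [walkMass_zero]
  | succ ℓ ih => simp [walkMass_succ, ih, pow_succ']

end AddCommMonoid

theorem walkMass_single_sub_single_succ [AddCommGroup M] [Module R M]
    (T : Module.End R M) (m : ℕ) (x : M) :
    walkMass T (Pi.single m x - Pi.single (m + 1) (T x)) = Pi.single m x := by
  funext ℓ
  induction ℓ with
  | zero => simp [walkMass_zero]
  | succ ℓ ih =>
    have apply_single :
        T ((Pi.single m x : ℕ → M) ℓ) = (Pi.single (m + 1) (T x) : ℕ → M) (ℓ + 1) := by
      simp [Pi.single_apply, apply_ite T]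
    rw [walkMass_succ, ih, apply_single, Pi.sub_apply, add_sub_cancel]

end WalkMass

theorem inv_diagonal_of_ne_zero {n K : Type*} [Fintype n] [DecidableEq n] [Field K]
    {d : n → K} (hd : ∀ i, d i ≠ 0) : (diagonal d)⁻¹ = diagonal d⁻¹ := by
  apply inv_eq_right_inv
  simp [diagonal_mul_diagonal, mul_inv_cancel₀ (hd _)]

theorem pushInit_snd {V : Type*} [DecidableEq V] (s : V) :
    (pushInit s).2 = Pi.single 0 (Pi.single s 1) := by
  funext k v
  by_cases hk : k = 0 <;> by_cases hv : v = s <;> simp [pushInit, hk, hv]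

section ForwardPush

variable {V : Type*} [Fintype V] [DecidableEq V] (G : SimpleGraph V) [DecidableRel G.Adj]

theorem transP_apply (hdeg : ∀ v, 0 < G.degree v) (v u : V) :
    transP G v u = if G.Adj u v then (G.degree u : ℝ)⁻¹ else 0 := by
  have hdeg_ne (w : V) : (G.degree w : ℝ) ≠ 0 := by exact_mod_cast (hdeg w).ne'
  simp [transP, inv_diagonal_of_ne_zero hdeg_ne, SimpleGraph.adjMatrix_apply, G.adj_comm v u]

/-- One step of the random walk as an operator on mass vectors, the step operator for `walkMass`. -/
noncomputable def transEnd : Module.End ℝ (V → ℝ) :=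
  toLin' (transP G)

theorem transEnd_pow_apply (k : ℕ) (x : V → ℝ) (t : V) :
    (transEnd G ^ k) x t = ∑ v, x v * stepProb G k v t := by
  simp [transEnd, ← toLin'_pow, mulVec, dotProduct, stepProb, mul_comm]

theorem transEnd_single_apply (hdeg : ∀ v, 0 < G.degree v) (u : V) (a : ℝ) (v : V) :
    transEnd G (Pi.single u a) v = if G.Adj u v then a / G.degree u else 0 := by
  simp [transEnd, transP_apply G hdeg, div_eq_inv_mul]

theorem pushOp_fst (σ : (ℕ → V → ℝ) × (ℕ → V → ℝ)) (u : V) (m : ℕ) :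
    (pushOp G σ u m).1 = σ.1 + Pi.single m (Pi.single u (σ.2 m u)) := by
  funext k v
  by_cases hk : k = m <;> by_cases hv : v = u <;> simp [pushOp, hk, hv]

theorem pushOp_snd (hdeg : ∀ v, 0 < G.degree v) (σ : (ℕ → V → ℝ) × (ℕ → V → ℝ))
    (u : V) (m : ℕ) :
    (pushOp G σ u m).2 = σ.2 - (Pi.single m (Pi.single u (σ.2 m u))
      - Pi.single (m + 1) (transEnd G (Pi.single u (σ.2 m u)))) := by
  funext k v
  rcases eq_or_ne k m with rfl | hk
  · by_cases hv : v = u <;> simp [pushOp, hv]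
  rcases eq_or_ne k (m + 1) with rfl | hk_succ
  · by_cases huv : G.Adj u v <;> simp [pushOp, transEnd_single_apply G hdeg, huv]
  · simp [pushOp, hk, hk_succ]

/-- The quantity conserved by pushes: the reserve at each level plus the mass that reaches this
level when all residues walk on. -/
noncomputable def pushMass (σ : (ℕ → V → ℝ) × (ℕ → V → ℝ)) : ℕ → V → ℝ :=
  σ.1 + walkMass (transEnd G) σ.2

theorem pushMass_apply (σ : (ℕ → V → ℝ) × (ℕ → V → ℝ)) (ℓ : ℕ) (t : V) :
    pushMass G σ ℓ t
      = σ.1 ℓ t + ∑ k ∈ range (ℓ + 1), ∑ v, σ.2 (ℓ - k) v * stepProb G k v t := by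
  simp [pushMass, walkMass_apply, transEnd_pow_apply]

theorem pushMass_pushInit (s : V) (ℓ : ℕ) (t : V) :
    pushMass G (pushInit s) ℓ t = stepProb G ℓ s t := by
  have reserve_eq_zero : (pushInit s).1 = 0 := rfl
  rw [pushMass, reserve_eq_zero, zero_add, pushInit_snd, walkMass_single_zero, transEnd_pow_apply]
  simp [Pi.single_apply]

theorem pushMass_pushOp (hdeg : ∀ v, 0 < G.degree v) (σ : (ℕ → V → ℝ) × (ℕ → V → ℝ))
    (u : V) (m : ℕ) : pushMass G (pushOp G σ u m) = pushMass G σ := by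
  rw [pushMass, pushOp_fst, pushOp_snd G hdeg, map_sub, walkMass_single_sub_single_succ,
    add_add_sub_cancel, pushMass]

theorem pushMass_pushRun (hdeg : ∀ v, 0 < G.degree v) (σ : (ℕ → V → ℝ) × (ℕ → V → ℝ))
    (ops : List (V × ℕ)) : pushMass G (pushRun G σ ops) = pushMass G σ := by
  induction ops generalizing σ with
  | nil => rfl
  | cons op ops ih => exact (ih _).trans (pushMass_pushOp G hdeg σ op.1 op.2)

end ForwardPush

/-- Forward-push invariant (Banerjee et al.): after any sequence of push
operations from the standard initialization at `s`, for all `0 ≤ ℓ ≤ L` and `t`,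
`p⁽ℓ⁾(s,t) = q_s⁽ℓ⁾(t) + Σ_{k=0}^{ℓ} Σ_{v} r_s^{(ℓ-k)}(v) p⁽ᵏ⁾(v,t)`. -/
theorem push_invariant {V : Type*} [Fintype V] [DecidableEq V]
    (G : SimpleGraph V) [DecidableRel G.Adj]
    (hdeg : ∀ v : V, 0 < G.degree v) (s : V) (L : ℕ) (ops : List (V × ℕ)) :
    ∀ ℓ ≤ L, ∀ t : V,
      stepProb G ℓ s t =
        (pushRun G (pushInit s) ops).1 ℓ t
          + ∑ k ∈ Finset.range (ℓ + 1), ∑ v : V,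
              (pushRun G (pushInit s) ops).2 (ℓ - k) v * stepProb G k v t := by
  intro ℓ _ t
  rw [← pushMass_apply, pushMass_pushRun G hdeg, pushMass_pushInit]
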